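/- Let A_i ⊆ R^n (i = 1,...,n) be compact strictly convex sets with nonempty interior, Q_i nonsingular n×n matrices, and f_i(x, u) = ⟨u', Q_i x⟩ where u' is the projection of u ∈ S^n to its first n coordinates. Then there exists u ∈ S^n such that for every i, both A_i ∩ H_u^+ and A_i ∩ H_u^− are nonempty and max_{x ∈ A_i ∩ H_u^+} f_i(x,u) − min_{x ∈ A_i ∩ H_u^+} f_i(x,u) = max_{x ∈ A_i ∩ H_u^−} f_i(x,u) − min_{x ∈ A_i ∩ H_u^−} f_i(x,u). -/

import Mathlib

/-- The closed upper half-space `H_u^+`. -/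
def Hplus (n : ℕ) (u : EuclideanSpace ℝ (Fin (n + 1))) : Set (EuclideanSpace ℝ (Fin n)) :=
  {x | (∑ i : Fin n, u (Fin.castSucc i) * x i) ≥ u (Fin.last n)}

/-- The closed lower half-space `H_u^-`. -/
def Hminus (n : ℕ) (u : EuclideanSpace ℝ (Fin (n + 1))) : Set (EuclideanSpace ℝ (Fin n)) :=
  {x | (∑ i : Fin n, u (Fin.castSucc i) * x i) ≤ u (Fin.last n)}

/-- `f_i(x,u) = ⟨u', Q_i x⟩` for a matrix `Q_i`. -/
def fQ (n : ℕ) (Q : Matrix (Fin n) (Fin n) ℝ)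
    (x : EuclideanSpace ℝ (Fin n)) (u : EuclideanSpace ℝ (Fin (n + 1))) : ℝ :=
  ∑ j : Fin n, u (Fin.castSucc j) * Q.mulVec x j

namespace BU

/-- Coboundary of a mod 2 cochain on lists. -/
def cob {α : Type*} : (List α → ZMod 2) → List α → ZMod 2
  | _, [] => 0
  | F, (v :: l) => F l + cob (fun m => F (v :: m)) l

theorem cob_add {α : Type*} (l : List α) : ∀ F G : List α → ZMod 2,
    cob (fun m => F m + G m) l = cob F l + cob G l := by
  induction l with
  | nil => intro F G; simp [cob]
  | cons v l ih => intro F G; simp only [cob]; rw [ih]; ring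

theorem cob_congr {α : Type*} (l : List α) : ∀ F G : List α → ZMod 2,
    (∀ m, m.Sublist l → m.length + 1 = l.length → F m = G m) → cob F l = cob G l := by
  induction l with
  | nil => intro F G _; simp [cob]
  | cons v l ih =>
    intro F G h
    simp only [cob]
    rw [h l (List.sublist_cons_self v l) (by simp)]
    rw [ih (fun m => F (v :: m)) (fun m => G (v :: m))]
    intro m hm hl
    exact h _ (hm.cons_cons v) (by simp [hl])

theorem two_zero (a : ZMod 2) : a + a = 0 := CharTwo.add_self_eq_zero a

theorem cob_cob {α : Type*} (l : List α) : ∀ F : List α → ZMod 2, cob (cob F) l = 0 := by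
  induction l with
  | nil => intro F; simp [cob]
  | cons v l ih =>
    intro F
    simp only [cob]
    rw [cob_add, ih, add_zero]
    exact two_zero _

theorem cob_map {α β : Type*} (f : α → β) (l : List α) : ∀ F : List β → ZMod 2,
    cob (fun m => F (m.map f)) l = cob F (l.map f) := by
  induction l with
  | nil => intro F; simp [cob]
  | cons v l ih =>
    intro F
    simp only [cob, List.map_cons]
    rw [ih (fun m => F (f v :: m))]

theorem cob_perm {α : Type*} {l l' : List α} (h : l.Perm l') : ∀ F : List α → ZMod 2,
    (∀ m m' : List α, m.Perm m' → F m = F m') → cob F l = cob F l' := by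
  induction h with
  | nil => intro F _; rfl
  | cons x h ih =>
    intro F hF
    simp only [cob]
    rw [hF _ _ h, ih _ (fun m m' hm => hF _ _ (hm.cons x))]
  | swap x y l =>
    intro F hF
    simp only [cob]
    have : (fun m => F (y :: x :: m)) = (fun m => F (x :: y :: m)) := by
      funext m; exact hF _ _ (List.Perm.swap x y m)
    rw [this]; ring
  | trans _ _ ih1 ih2 => intro F hF; rw [ih1 F hF, ih2 F hF]

/-- Alternating sign patterns. -/
def alt {n : ℕ} : Bool → List (Fin n × Bool) → ZMod 2
  | _, [] => 1
  | s, (x :: l) => if x.2 = s then alt (!s) l else 0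

theorem cob_alt {n : ℕ} (l : List (Fin n × Bool)) : ∀ s : Bool,
    cob (alt s) l = alt s l + alt (!s) l := by
  induction l with
  | nil => intro s; simp [cob, alt]; exact (two_zero 1).symm
  | cons x l ih =>
    intro s
    simp only [cob, alt]
    by_cases hx : x.2 = s
    · simp only [hx, if_true]
      have e : cob (fun m => alt (!s) m) l = _ := ih (!s)
      rw [e]
      have : ¬ (s = !s) := by cases s <;> simp
      simp only [this, if_false, Bool.not_not]
      have := two_zero (alt s l)
      linear_combination this
    · have hx' : x.2 = !s := by revert hx; cases x.2 <;> cases s <;> simp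
      have hz : ∀ k : List (Fin n × Bool), cob (fun _ => (0 : ZMod 2)) k = 0 := by
        intro k
        induction k with
        | nil => rfl
        | cons a k ih => simp [cob, ih]
      have : ¬ ((!s) = s) := by cases s <;> simp
      simp [hx', this, hz]

def flip {n : ℕ} (x : Fin n × Bool) : Fin n × Bool := (x.1, !x.2)

theorem alt_flip {n : ℕ} (l : List (Fin n × Bool)) : ∀ s : Bool,
    alt s (l.map flip) = alt (!s) l := by
  induction l with
  | nil => intro s; rfl
  | cons x l ih =>
    intro s
    simp only [List.map_cons, alt, ih, flip]
    cases x.2 <;> cases s <;> simp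

def Srt {n : ℕ} (l : List (Fin n × Bool)) : Prop := l.Pairwise (fun a b => a.1 < b.1)

open Classical in
/-- The Fan cochain. -/
noncomputable def fan {n : ℕ} (l : List (Fin n × Bool)) : ZMod 2 :=
  if h : ∃ m, l.Perm m ∧ Srt m then alt true h.choose else 0

theorem srt_unique {n : ℕ} {l m : List (Fin n × Bool)} (h : l.Perm m) (hl : Srt l) (hm : Srt m) :
    l = m := by
  refine List.Perm.eq_of_pairwise (le := fun a b : Fin n × Bool => a.1 < b.1) ?_ hl hm h
  intro a b _ _ h1 h2
  exact absurd h1 (not_lt.mpr h2.le)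

theorem fan_srt {n : ℕ} {l m : List (Fin n × Bool)} (hp : l.Perm m) (hm : Srt m) :
    fan l = alt true m := by
  have h : ∃ m, l.Perm m ∧ Srt m := ⟨m, hp, hm⟩
  unfold fan
  rw [dif_pos h]
  rw [srt_unique (h.choose_spec.1.symm.trans hp) h.choose_spec.2 hm]

theorem fan_not {n : ℕ} {l : List (Fin n × Bool)} (h : ¬ ∃ m, l.Perm m ∧ Srt m) :
    fan l = 0 := by
  unfold fan; rw [dif_neg h]

theorem fan_perm {n : ℕ} (l m : List (Fin n × Bool)) (hp : l.Perm m) : fan l = fan m := by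
  by_cases h : ∃ k, m.Perm k ∧ Srt k
  · obtain ⟨k, h1, h2⟩ := h
    rw [fan_srt h1 h2, fan_srt (hp.trans h1) h2]
  · rw [fan_not h, fan_not]
    rintro ⟨k, h1, h2⟩
    exact h ⟨k, hp.symm.trans h1, h2⟩

theorem srt_nodup {n : ℕ} {l : List (Fin n × Bool)} (h : Srt l) : (l.map Prod.fst).Nodup := by
  rw [List.Nodup, List.pairwise_map]
  exact h.imp (fun h => h.ne)

theorem fan_length {n : ℕ} (l : List (Fin n × Bool)) (hl : n < l.length) : fan l = 0 := by
  apply fan_not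
  rintro ⟨k, h1, h2⟩
  have := (srt_nodup h2).length_le_card
  simp [← h1.length_eq] at this
  omega

theorem fan_dup {n : ℕ} (a : Fin n × Bool) (l : List (Fin n × Bool)) : fan (a :: a :: l) = 0 := by
  apply fan_not
  rintro ⟨k, h1, h2⟩
  have := (h1.map Prod.fst).nodup_iff.mpr (srt_nodup h2)
  simp at this

theorem exists_srt {n : ℕ} (l : List (Fin n × Bool)) (h : (l.map Prod.fst).Nodup) :
    ∃ m, l.Perm m ∧ Srt m := by
  classical
  have hp := List.perm_insertionSort (fun a b : Fin n × Bool => a.1 ≤ b.1) l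
  refine ⟨_, hp.symm, ?_⟩
  have : Std.Total (fun a b : Fin n × Bool => a.1 ≤ b.1) := ⟨fun a b => le_total _ _⟩
  have : IsTrans _ (fun a b : Fin n × Bool => a.1 ≤ b.1) := ⟨fun a b c => le_trans⟩
  have h1 := List.pairwise_insertionSort (fun a b : Fin n × Bool => a.1 ≤ b.1) l
  have h2 := (hp.map Prod.fst).nodup_iff.mpr h
  rw [List.Nodup, List.pairwise_map] at h2
  exact h1.imp₂ (fun a b h1 h2 => lt_of_le_of_ne h1 h2) h2

theorem srt_flip {n : ℕ} {l : List (Fin n × Bool)} (h : Srt l) : Srt (l.map flip) := by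
  unfold Srt
  rw [List.pairwise_map]
  exact h

theorem fan_main {n : ℕ} (l : List (Fin n × Bool))
    (hc : ∀ x ∈ l, ∀ y ∈ l, x.1 = y.1 → x = y) :
    cob fan l = fan l + fan (l.map flip) := by
  by_cases h : (l.map Prod.fst).Nodup
  · obtain ⟨m, hp, hm⟩ := exists_srt l h
    rw [cob_perm hp _ fan_perm, fan_srt hp hm, fan_srt (hp.map flip) (srt_flip hm), alt_flip,
      ← cob_alt]
    apply cob_congr
    intro k hk _
    exact fan_srt (List.Perm.refl k) (List.Pairwise.sublist hk hm)
  · have hnd : ¬ l.Nodup := by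
      intro h'
      exact h ((List.nodup_map_iff_inj_on h').mpr hc)
    obtain ⟨a, ha⟩ : ∃ a, List.Duplicate a l := List.exists_duplicate_iff_not_nodup.mpr hnd
    rw [List.duplicate_iff_sublist] at ha
    obtain ⟨t, ht⟩ := ha.exists_perm_append
    have ht : l.Perm (a :: a :: t) := by simpa using ht
    rw [cob_perm ht _ fan_perm, fan_perm _ _ ht, fan_perm _ _ (ht.map flip)]
    simp only [List.map_cons, fan_dup, cob]
    have hz : ∀ k : List (Fin n × Bool), cob (fun _ => (0 : ZMod 2)) k = 0 := by
      intro k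
      induction k with
      | nil => rfl
      | cons a k ih => simp [cob, ih]
    rw [hz]
    have := two_zero (fan (a :: t))
    linear_combination this


section Subdiv
variable {E : Type*} [NormedAddCommGroup E] [NormedSpace ℝ E]

/-- Barycenter of a list of points. -/
noncomputable def bary (l : List E) : E := ((l.length : ℝ)⁻¹) • l.sum

/-- Barycentric subdivision acting on cochains, to be evaluated at lists of length `k`. -/
noncomputable def sd : ℕ → (List E → ZMod 2) → List E → ZMod 2
  | 0, F, l => F l
  | (k + 1), F, l => cob (sd k (fun m => F (bary l :: m))) l

theorem sd_add (k : ℕ) : ∀ F G : List E → ZMod 2,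
    sd k (fun m => F m + G m) = fun m => sd k F m + sd k G m := by
  induction k with
  | zero => intro F G; rfl
  | succ k ih =>
    intro F G
    funext l
    simp only [sd]
    rw [ih, cob_add]

theorem sd_iter_add (k m : ℕ) (F G : List E → ZMod 2) :
    (sd k)^[m] (fun m => F m + G m) = fun l => (sd k)^[m] F l + (sd k)^[m] G l := by
  induction m with
  | zero => rfl
  | succ m ih => simp only [Function.iterate_succ_apply', ih, sd_add]

theorem sd_cob (k : ℕ) : ∀ (F : List E → ZMod 2) (l : List E), l.length = k + 1 →
    sd (k + 1) (cob F) l = cob (sd k F) l := by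
  induction k with
  | zero =>
    intro F l hl
    obtain ⟨x, rfl⟩ := List.length_eq_one_iff.mp hl
    simp [sd, cob]
  | succ k ih =>
    intro F l hl
    rw [sd]
    have h1 : (fun m => cob F (bary l :: m))
        = fun m => F m + cob (fun m => F (bary l :: m)) m := by
      funext m; rfl
    rw [h1, sd_add, cob_add]
    have h2 : cob (sd (k + 1) (cob (fun m => F (bary l :: m)))) l
        = cob (cob (sd k (fun m => F (bary l :: m)))) l := by
      apply cob_congr
      intro m _ hm
      exact ih _ m (by omega)
    have h3 : cob (fun m => sd (k + 1) (cob (fun m => F (bary l :: m))) m) l = 0 := by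
      rw [← cob_cob l (sd k (fun m => F (bary l :: m)))]; exact h2
    rw [h3, add_zero]

theorem bary_neg (l : List E) : bary (l.map (fun x => -x)) = - bary l := by
  unfold bary
  rw [List.length_map, ← smul_neg]
  congr 1
  induction l with
  | nil => simp
  | cons a l ih => simp [ih]; abel

theorem sd_neg (k : ℕ) : ∀ (F : List E → ZMod 2) (l : List E),
    sd k (fun m => F (m.map (fun x => -x))) l = sd k F (l.map (fun x => -x)) := by
  induction k with
  | zero => intro F l; rfl
  | succ k ih =>
    intro F l
    simp only [sd, List.map_cons]
    rw [← cob_map]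
    congr 1
    funext m
    rw [ih (fun m => F (-bary l :: m)), bary_neg]

theorem sd_iter_neg (k m : ℕ) (F : List E → ZMod 2) :
    (sd k)^[m] (fun m => F (m.map (fun x => -x))) =
      fun l => (sd k)^[m] F (l.map (fun x => -x)) := by
  induction m with
  | zero => rfl
  | succ m ih =>
    funext l
    simp only [Function.iterate_succ_apply', ih, sd_neg]

theorem sum_sub_le (l : List E) (w : E) (D : ℝ) (h : ∀ v ∈ l, dist v w ≤ D) :
    ‖l.sum - (l.length : ℝ) • w‖ ≤ l.length * D := by
  induction l with
  | nil => simp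
  | cons a l ih =>
    have h1 := ih (fun v hv => h v (List.mem_cons_of_mem a hv))
    have h2 := h a List.mem_cons_self
    rw [dist_eq_norm] at h2
    have e : (a :: l).sum - ((a :: l).length : ℝ) • w
        = (a - w) + (l.sum - (l.length : ℝ) • w) := by
      simp [add_smul]; abel
    rw [e]
    refine (norm_add_le _ _).trans ?_
    simp only [List.length_cons, Nat.cast_add, Nat.cast_one]
    linarith

theorem bary_dist (l : List E) (w : E) (hw : w ∈ l) (D q : ℝ) (hD : 0 ≤ D)
    (hq : (l.length : ℝ) - 1 ≤ q * l.length)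
    (h : ∀ v ∈ l, dist v w ≤ D) : dist (bary l) w ≤ q * D := by
  classical
  have hp := List.perm_cons_erase hw
  have hlen : l.length = (l.erase w).length + 1 := by simpa using hp.length_eq
  have hpos : (0 : ℝ) < l.length := by rw [hlen]; positivity
  have h1 := sum_sub_le (l.erase w) w D (fun v hv => h v (List.mem_of_mem_erase hv))
  have hs : l.sum = w + (l.erase w).sum := by simpa using hp.sum_eq
  have e : bary l - w = (l.length : ℝ)⁻¹ • ((l.erase w).sum - ((l.erase w).length : ℝ) • w) := by
    have : l.sum - (l.length : ℝ) • w = (l.erase w).sum - ((l.erase w).length : ℝ) • w := by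
      rw [hs, hlen]; push_cast; rw [add_smul]; simp; abel
    rw [← this, smul_sub, smul_smul, inv_mul_cancel₀ hpos.ne', one_smul]; rfl
  rw [dist_eq_norm, e, norm_smul, norm_inv, Real.norm_of_nonneg hpos.le,
    inv_mul_le_iff₀ hpos]
  refine h1.trans ?_
  have : ((l.erase w).length : ℝ) = l.length - 1 := by rw [hlen]; push_cast; ring
  rw [this]
  nlinarith

theorem bary_mem (l : List E) (hl : l ≠ []) : bary l ∈ convexHull ℝ {x | x ∈ l} := by
  have hpos : (0 : ℝ) < l.length := by
    have := List.length_pos_of_ne_nil hl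
    exact_mod_cast this
  have : bary l = ∑ i : Fin l.length, ((l.length : ℝ)⁻¹) • l[i] := by
    rw [← Finset.smul_sum, bary]; congr 1
    exact (Fin.sum_univ_getElem l).symm
  rw [this]
  refine (convex_convexHull ℝ _).sum_mem (fun i _ => by positivity) ?_ ?_
  · simp [hpos.ne']
  · intro i _
    exact subset_convexHull ℝ _ (by simp)

theorem sd_congr (k : ℕ) (q : ℝ) (hq : ∀ j : ℕ, j ≤ k → (j : ℝ) - 1 ≤ q * j) :
    ∀ (F G : List E → ZMod 2) (l : List E) (D : ℝ), 0 ≤ D → l.length = k →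
    (∀ x ∈ l, ∀ y ∈ l, dist x y ≤ D) →
    (∀ m : List E, m.length = k → (∀ x ∈ m, x ∈ convexHull ℝ {y | y ∈ l}) →
      (∀ x ∈ m, ∀ y ∈ m, dist x y ≤ q * D) → F m = G m) → sd k F l = sd k G l := by
  induction k with
  | zero =>
    intro F G l D hD hl _ h
    obtain rfl := List.length_eq_zero_iff.mp hl
    exact h [] rfl (by simp) (by simp)
  | succ k ih =>
    intro F G l D hD hl hd h
    simp only [sd]
    apply cob_congr
    intro l1 hl1 hlen
    have hsub : convexHull ℝ {y | y ∈ l1} ⊆ convexHull ℝ {y | y ∈ l} :=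
      convexHull_mono (fun y hy => hl1.subset hy)
    have hb : ∀ y ∈ convexHull ℝ {y | y ∈ l}, dist (bary l) y ≤ q * D := by
      have : convexHull ℝ {y | y ∈ l} ⊆ Metric.closedBall (bary l) (q * D) := by
        refine convexHull_min ?_ (convex_closedBall _ _)
        intro w hw
        rw [Metric.mem_closedBall, dist_comm]
        exact bary_dist l w hw D q hD (hq _ hl.le) (fun v hv => hd v hv w hw)
      intro y hy
      have := this hy
      rwa [Metric.mem_closedBall, dist_comm] at this
    have hqD : 0 ≤ q * D := by
      have := hq 1 (by omega)
      simp at this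
      positivity
    refine ih (fun j hj => hq j (by omega)) _ _ l1 D hD (by omega)
      (fun x hx y hy => hd x (hl1.subset hx) y (hl1.subset hy)) ?_
    intro m hm hm1 hm2
    apply h
    · simp [hm]
    · intro x hx
      rcases List.mem_cons.mp hx with rfl | hx
      · exact bary_mem l (by rintro rfl; simp at hl)
      · exact hsub (hm1 x hx)
    · intro x hx y hy
      rcases List.mem_cons.mp hx with rfl | hx <;> rcases List.mem_cons.mp hy with rfl | hy
      · simpa using hqD
      · exact hb y (hsub (hm1 y hy))
      · rw [dist_comm]; exact hb x (hsub (hm1 x hx))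
      · exact hm2 x hx y hy

theorem sd_iter_congr (k : ℕ) (q : ℝ) (hq0 : 0 ≤ q) (hq : ∀ j : ℕ, j ≤ k → (j : ℝ) - 1 ≤ q * j)
    (C : Set E) (hC : Convex ℝ C) (F G : List E → ZMod 2) (m : ℕ) :
    ∀ (l : List E) (D : ℝ), 0 ≤ D → l.length = k → (∀ x ∈ l, x ∈ C) →
    (∀ x ∈ l, ∀ y ∈ l, dist x y ≤ D) →
    (∀ l' : List E, l'.length = k → (∀ x ∈ l', x ∈ C) →
      (∀ x ∈ l', ∀ y ∈ l', dist x y ≤ q ^ m * D) → F l' = G l') →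
    (sd k)^[m] F l = (sd k)^[m] G l := by
  induction m with
  | zero =>
    intro l D _ hl hlC hd h
    exact h l hl hlC (by simpa using hd)
  | succ m ih =>
    intro l D hD hl hlC hd h
    simp only [Function.iterate_succ_apply']
    refine sd_congr k q hq _ _ l D hD hl hd ?_
    intro l1 h1 h2 h3
    refine ih l1 (q * D) (by positivity) h1 ?_ h3 ?_
    · intro x hx
      exact convexHull_min (fun y hy => hlC y hy) hC (h2 x hx)
    · intro l' a1 a2 a3
      refine h l' a1 a2 ?_
      intro x hx y hy
      refine (a3 x hx y hy).trans (le_of_eq ?_)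
      ring

theorem sd_iter_cob (k m : ℕ) (F : List E → ZMod 2) : ∀ l : List E, l.length = k + 1 →
    (sd (k + 1))^[m] (cob F) l = cob ((sd k)^[m] F) l := by
  induction m with
  | zero => intro l _; rfl
  | succ m ih =>
    intro l hl
    classical
    simp only [Function.iterate_succ_apply']
    rw [← sd_cob k _ l hl]
    refine sd_congr (k + 1) 1 (fun j _ => by linarith) _ _ l
      (∑ x ∈ l.toFinset, ∑ y ∈ l.toFinset, dist x y) ?_ hl ?_ ?_
    · exact Finset.sum_nonneg fun _ _ => Finset.sum_nonneg fun _ _ => dist_nonneg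
    · intro x hx y hy
      refine le_trans ?_ (Finset.single_le_sum (f := fun x => ∑ y ∈ l.toFinset, dist x y)
        (fun _ _ => Finset.sum_nonneg fun _ _ => dist_nonneg) (List.mem_toFinset.mpr hx))
      exact Finset.single_le_sum (f := fun y => dist x y)
        (fun _ _ => dist_nonneg) (List.mem_toFinset.mpr hy)
    · intro m1 hm1 _ _
      exact ih m1 hm1

/-- Hemisphere chains, acting on cochains. -/
def hemi (e : ℕ → E) : ℕ → (List E → ZMod 2) → ZMod 2
  | 0, F => F [e 0]
  | (k + 1), F => hemi e k (fun m => F (e (k + 1) :: m)) +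
      hemi e k (fun m => F (e (k + 1) :: m.map (fun x => -x)))

theorem hemi_add (e : ℕ → E) (k : ℕ) : ∀ F G : List E → ZMod 2,
    hemi e k (fun m => F m + G m) = hemi e k F + hemi e k G := by
  induction k with
  | zero => intro F G; rfl
  | succ k ih =>
    intro F G
    simp only [hemi]
    rw [ih, ih]; ring

theorem hemi_cob (e : ℕ → E) (k : ℕ) : ∀ F : List E → ZMod 2,
    hemi e (k + 1) (cob F) = hemi e k F + hemi e k (fun m => F (m.map (fun x => -x))) := by
  have step : ∀ k, (∀ G : List E → ZMod 2,
      hemi e k (cob G) + hemi e k (fun m => cob G (m.map (fun x => -x))) = 0) →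
      ∀ F : List E → ZMod 2,
      hemi e (k + 1) (cob F) = hemi e k F + hemi e k (fun m => F (m.map (fun x => -x))) := by
    intro k hk F
    simp only [hemi, cob]
    rw [hemi_add, hemi_add]
    have := hk (fun m => F (e (k + 1) :: m))
    linear_combination this
  have nn : ∀ m : List E, (m.map (fun x => -x)).map (fun x => -x) = m := by
    intro m; simp [Function.comp_def]
  have main : ∀ k, ∀ G : List E → ZMod 2,
      hemi e k (cob G) + hemi e k (fun m => cob G (m.map (fun x => -x))) = 0 := by
    intro k
    induction k with
    | zero => intro G; simp [hemi, cob]; exact two_zero _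
    | succ k ih =>
      intro G
      have h1 := step k ih G
      have h2 := step k ih (fun m => G (m.map (fun x => -x)))
      have h3 : cob (fun m : List E => G (m.map (fun x => -x)))
          = fun m => cob G (m.map (fun x => -x)) := by
        funext m; exact cob_map _ m G
      rw [h3] at h2
      rw [h1, h2]
      simp only [nn]
      have a1 := two_zero (hemi e k G)
      have a2 := two_zero (hemi e k (fun m => G (m.map (fun x => -x))))
      simp only [← Function.comp_def] at *
      linear_combination a1 + a2
  exact step k (main k)

theorem hemi_congr (e : ℕ → E) (k : ℕ) : ∀ F G : List E → ZMod 2,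
    (∀ l : List E, l.length = k + 1 →
      (∃ s : ℕ → ℝ, (∀ j, s j = 1 ∨ s j = -1) ∧ ∀ v ∈ l, ∃ j ≤ k, v = s j • e j) → F l = G l) →
    hemi e k F = hemi e k G := by
  induction k with
  | zero =>
    intro F G h
    exact h [e 0] rfl ⟨fun _ => 1, by simp, by simp⟩
  | succ k ih =>
    intro F G h
    simp only [hemi]
    congr 1
    · apply ih
      rintro l hl ⟨s, hs, hv⟩
      apply h _ (by simp [hl])
      refine ⟨fun j => if j = k + 1 then 1 else s j, ?_, ?_⟩
      · intro j; dsimp only; split_ifs; exacts [Or.inl rfl, hs j]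
      · intro v hv'
        rcases List.mem_cons.mp hv' with rfl | hv'
        · exact ⟨k + 1, le_rfl, by simp⟩
        · obtain ⟨j, hj, rfl⟩ := hv v hv'
          exact ⟨j, by omega, by dsimp only; rw [if_neg (by omega)]⟩
    · apply ih
      rintro l hl ⟨s, hs, hv⟩
      apply h _ (by simp [hl])
      refine ⟨fun j => if j = k + 1 then 1 else - s j, ?_, ?_⟩
      · intro j; dsimp only; split_ifs
        · exact Or.inl rfl
        · rcases hs j with h | h <;> simp [h]
      · intro v hv'
        rcases List.mem_cons.mp hv' with rfl | hv'
        · exact ⟨k + 1, le_rfl, by simp⟩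
        · obtain ⟨w, hw, rfl⟩ := List.mem_map.mp hv'
          obtain ⟨j, hj, rfl⟩ := hv w hw
          exact ⟨j, by omega, by dsimp only; rw [if_neg (by omega)]; simp⟩

/-- Tucker-type lemma. -/
theorem tucker_lemma (n : ℕ) (e : ℕ → E) (he : ∀ j, ‖e j‖ ≤ 1) (K : Set E)
    (hK : ∀ s : ℕ → ℝ, (∀ j, s j = 1 ∨ s j = -1) →
      convexHull ℝ {v | ∃ j ≤ n, v = s j • e j} ⊆ K)
    (lam : E → Fin n × Bool) (hneg : ∀ x ∈ K, lam (-x) = flip (lam x))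
    (δ : ℝ) (hδ : 0 < δ)
    (hcomp : ∀ x ∈ K, ∀ y ∈ K, dist x y < δ → (lam x).1 = (lam y).1 → lam x = lam y) : False := by
  set Φ : List E → ZMod 2 := fun l => fan (l.map lam) with hΦ
  set q : ℝ := (n : ℝ) / (n + 1) with hq
  have hq0 : 0 ≤ q := by positivity
  have hq1 : q < 1 := by rw [hq, div_lt_one (by positivity)]; linarith
  obtain ⟨m, hm⟩ : ∃ m : ℕ, q ^ m * 2 < δ := by
    obtain ⟨m, hm⟩ := exists_pow_lt_of_lt_one (show 0 < δ / 2 by positivity) hq1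
    exact ⟨m, by linarith⟩
  have hqj : ∀ k, k ≤ n + 1 → ∀ j : ℕ, j ≤ k → (j : ℝ) - 1 ≤ q * j := by
    intro k hk j hj
    have : (j : ℝ) ≤ n + 1 := by exact_mod_cast hj.trans hk
    have e : q * j - (j - 1) = (n + 1 - j) / (n + 1) := by rw [hq]; field_simp; ring
    have : 0 ≤ ((n : ℝ) + 1 - j) / (n + 1) := div_nonneg (by linarith) (by positivity)
    linarith
  have loc : ∀ k ≤ n, ∀ F G : List E → ZMod 2,
      (∀ l' : List E, l'.length = k + 1 → (∀ x ∈ l', x ∈ K) →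
      (∀ x ∈ l', ∀ y ∈ l', dist x y < δ) → F l' = G l') →
      hemi e k ((sd (k + 1))^[m] F) = hemi e k ((sd (k + 1))^[m] G) := by
    intro k hk F G h
    apply hemi_congr
    rintro l hl ⟨s, hs, hv⟩
    refine sd_iter_congr (k + 1) q hq0 (hqj _ (by omega)) _ (convex_convexHull ℝ
      {v | ∃ j ≤ n, v = s j • e j}) F G m l 2 (by norm_num) hl ?_ ?_ ?_
    · intro x hx
      obtain ⟨j, hj, h⟩ := hv x hx
      exact subset_convexHull ℝ _ ⟨j, by omega, h⟩
    · have hn : ∀ x ∈ l, ‖x‖ ≤ 1 := by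
        intro x hx
        obtain ⟨j, hj, rfl⟩ := hv x hx
        rcases hs j with h | h <;> simp [h, he]
      intro x hx y hy
      rw [dist_eq_norm]
      refine (norm_sub_le _ _).trans ?_
      linarith [hn x hx, hn y hy]
    · intro l' a1 a2 a3
      exact h l' a1 (fun x hx => hK s hs (a2 x hx)) (fun x hx y hy => (a3 x hx y hy).trans_lt hm)
  have a : ∀ k ≤ n, hemi e k ((sd (k + 1))^[m] (fun l => Φ l + Φ (l.map (fun x => -x)))) = 1 := by
    have st : ∀ k ≤ n, hemi e k ((sd (k + 1))^[m] (fun l => Φ l + Φ (l.map (fun x => -x))))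
        = hemi e k (cob ((sd k)^[m] Φ)) := by
      intro k hk
      rw [loc k hk _ (cob Φ)]
      · apply hemi_congr
        intro l hl _
        exact sd_iter_cob k m Φ l hl
      · intro l _ h1 h2
        have e1 : cob Φ l = cob fan (l.map lam) := cob_map lam l fan
        rw [e1, fan_main]
        · simp only [hΦ]
          congr 2
          rw [List.map_map, List.map_map]
          apply List.map_congr_left
          intro x hx
          exact hneg x (h1 x hx)
        · intro x hx y hy hxy
          obtain ⟨x, hx', rfl⟩ := List.mem_map.mp hx
          obtain ⟨y, hy', rfl⟩ := List.mem_map.mp hy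
          exact hcomp x (h1 x hx') y (h1 y hy') (h2 x hx' y hy') hxy
    intro k
    induction k with
    | zero =>
      intro hk
      rw [st 0 hk]
      simp only [hemi, cob, add_zero]
      have : ∀ m, (sd 0)^[m] Φ [] = Φ [] := by
        intro m
        induction m with
        | zero => rfl
        | succ m ih => rw [Function.iterate_succ_apply']; exact ih
      rw [this]
      exact fan_srt (List.Perm.refl []) List.Pairwise.nil
    | succ k ih =>
      intro hk
      rw [st _ hk, hemi_cob, ← ih (by omega), sd_iter_add, hemi_add, sd_iter_neg]
  have h1 := a n le_rfl
  rw [loc n le_rfl _ (fun _ => 0 + 0)] at h1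
  · rw [sd_iter_add, hemi_add, two_zero] at h1
    exact zero_ne_one h1
  · intro l hl _ _
    simp only [hΦ]
    rw [fan_length _ (by simp [hl]), fan_length _ (by simp [hl])]

end Subdiv

/-- Lusternik-Schnirelmann type form of the Borsuk-Ulam theorem. -/
theorem ls (n : ℕ) (U : Fin n → Bool → Set (EuclideanSpace ℝ (Fin (n + 1))))
    (hU : ∀ i s, IsOpen (U i s)) (hdisj : ∀ i x, x ∈ U i true → x ∈ U i false → False)
    (hneg : ∀ i s x, x ∈ U i s → -x ∈ U i (!s))
    (hcov : ∀ x, x ≠ 0 → ∃ i s, x ∈ U i s) : False := by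
  classical
  let K : Set (EuclideanSpace ℝ (Fin (n + 1))) := {x | ∑ i, |x i| = 1}
  have hKc : IsCompact K := by
    refine Metric.isCompact_of_isClosed_isBounded ?_ ?_
    · exact isClosed_eq (by fun_prop) continuous_const
    · refine (Metric.isBounded_iff_subset_closedBall 0).mpr ⟨n + 1, ?_⟩
      intro x hx
      rw [mem_closedBall_zero_iff, EuclideanSpace.norm_eq]
      have hx : ∑ i, |x i| = 1 := hx
      have h1 : ∀ i, |x i| ≤ 1 := fun i => by
        rw [← hx]
        exact Finset.single_le_sum (f := fun i => |x i|) (fun _ _ => abs_nonneg _)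
          (Finset.mem_univ i)
      apply Real.sqrt_le_iff.mpr ⟨by positivity, ?_⟩
      have : ∑ i, ‖x i‖ ^ 2 ≤ ∑ i : Fin (n + 1), (1 : ℝ) := by
        refine Finset.sum_le_sum fun i _ => ?_
        rw [Real.norm_eq_abs]
        exact pow_le_one₀ (abs_nonneg _) (h1 i)
      simp at this
      simp only [Real.norm_eq_abs, sq_abs]
      nlinarith [Nat.cast_nonneg (α := ℝ) n]
  have hK0 : ∀ x ∈ K, x ≠ 0 := by
    rintro x hx rfl
    have hx : ∑ i : Fin (n + 1), |(0 : EuclideanSpace ℝ (Fin (n + 1))) i| = 1 := hx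
    simp at hx
  obtain ⟨δ, hδ, hleb⟩ := lebesgue_number_lemma_of_metric (s := K)
    (c := fun p : Fin n × Bool => U p.1 p.2) hKc (fun p => hU _ _) (by
      intro x hx
      obtain ⟨i, s, h⟩ := hcov x (hK0 x hx)
      exact Set.mem_iUnion.mpr ⟨(i, s), h⟩)
  have hball : ∀ i s x, Metric.ball x δ ⊆ U i s → Metric.ball (-x) δ ⊆ U i (!s) := by
    intro i s x h y hy
    have : -y ∈ Metric.ball x δ := by
      rw [Metric.mem_ball] at hy ⊢
      rwa [← dist_neg_neg, neg_neg]
    have := hneg i s _ (h this)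
    rwa [neg_neg] at this
  have hKne : ∃ x, x ∈ K := by
    refine ⟨EuclideanSpace.single 0 1, ?_⟩
    change ∑ i, |(EuclideanSpace.single (0 : Fin (n + 1)) (1 : ℝ)) i| = 1
    simp [Pi.single_apply, apply_ite abs]
  obtain ⟨x0, hx0⟩ := hKne
  obtain ⟨p0, _⟩ := hleb x0 hx0
  have : Nonempty (Fin n) := ⟨p0.1⟩
  let idx : EuclideanSpace ℝ (Fin (n + 1)) → Fin n := fun x =>
    Classical.epsilon (fun i => ∃ s, Metric.ball x δ ⊆ U i s)
  have hidx : ∀ x ∈ K, ∃ s, Metric.ball x δ ⊆ U (idx x) s := by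
    intro x hx
    obtain ⟨p, hp⟩ := hleb x hx
    exact Classical.epsilon_spec (p := fun i => ∃ s, Metric.ball x δ ⊆ U i s) ⟨p.1, p.2, hp⟩
  have hidxn : ∀ x, idx (-x) = idx x := by
    intro x
    have : (fun i => ∃ s, Metric.ball (-x) δ ⊆ U i s) = (fun i => ∃ s, Metric.ball x δ ⊆ U i s) := by
      funext i
      apply propext
      constructor
      · rintro ⟨s, h⟩
        have := hball _ _ _ h
        rw [neg_neg] at this
        exact ⟨_, this⟩
      · rintro ⟨s, h⟩
        exact ⟨_, hball _ _ _ h⟩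
    simp only [idx, this]
  let lam : EuclideanSpace ℝ (Fin (n + 1)) → Fin n × Bool := fun x =>
    (idx x, decide (Metric.ball x δ ⊆ U (idx x) true))
  have hlam : ∀ x ∈ K, Metric.ball x δ ⊆ U (lam x).1 (lam x).2 := by
    intro x hx
    by_cases h : Metric.ball x δ ⊆ U (idx x) true
    · simpa [lam, h] using h
    · obtain ⟨s, hs⟩ := hidx x hx
      cases s
      · simpa [lam, h] using hs
      · exact absurd hs h
  have hd : ∀ i s t x, x ∈ U i s → x ∈ U i t → s = t := by
    intro i s t x h1 h2
    cases s <;> cases t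
    · rfl
    · exact (hdisj i x h2 h1).elim
    · exact (hdisj i x h1 h2).elim
    · rfl
  have hKn : ∀ x ∈ K, -x ∈ K := by
    intro x hx
    have hx : ∑ i, |x i| = 1 := hx
    change ∑ i, |(-x) i| = 1
    simpa using hx
  refine tucker_lemma n (fun j => EuclideanSpace.single (Fin.ofNat (n + 1) j) (1 : ℝ)) (by simp) K ?_
    lam ?_ δ hδ ?_
  · intro s hs
    have hs1 : ∀ j, s j * s j = 1 := by
      intro j; rcases hs j with h | h <;> simp [h]
    have hsa : ∀ j, |s j| = 1 := by
      intro j; rcases hs j with h | h <;> simp [h]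
    have hconv : Convex ℝ {x : EuclideanSpace ℝ (Fin (n + 1)) |
        (∀ i, 0 ≤ s i.val * x i) ∧ ∑ i, s i.val * x i = 1} := by
      rintro x ⟨hx1, hx2⟩ y ⟨hy1, hy2⟩ a b ha hb hab
      have e : ∀ i : Fin (n + 1), s i.val * (a • x + b • y) i
          = a * (s i.val * x i) + b * (s i.val * y i) := by
        intro i; simp; ring
      refine ⟨fun i => ?_, ?_⟩
      · rw [e]
        have := hx1 i
        have := hy1 i
        positivity
      · simp only [e]
        rw [Finset.sum_add_distrib, ← Finset.mul_sum, ← Finset.mul_sum, hx2, hy2]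
        linarith
    refine (convexHull_min ?_ hconv).trans ?_
    · rintro v ⟨j, hj, rfl⟩
      have hval : (Fin.ofNat (n + 1) j).val = j := Nat.mod_eq_of_lt (by omega)
      have e : ∀ i : Fin (n + 1), s i.val *
          (s j • EuclideanSpace.single (Fin.ofNat (n + 1) j) (1 : ℝ)) i
          = if i = Fin.ofNat (n + 1) j then 1 else 0 := by
        intro i
        by_cases h : i = Fin.ofNat (n + 1) j
        · subst h
          rw [hval]
          simp [hs1]
        · rw [if_neg h, PiLp.smul_apply, PiLp.single_apply, if_neg h]; simp
      refine ⟨fun i => ?_, ?_⟩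
      · rw [e]; split_ifs <;> norm_num
      · simp only [e]; simp
    · rintro x ⟨hx1, hx2⟩
      change ∑ i, |x i| = 1
      rw [← hx2]
      refine Finset.sum_congr rfl fun i _ => ?_
      rw [← abs_of_nonneg (hx1 i), abs_mul, hsa, one_mul]
  · intro x hx
    have h1 := hlam _ (hKn x hx)
    have h2 := hball _ _ _ (hlam x hx)
    have e : (lam (-x)).1 = (lam x).1 := hidxn x
    rw [e] at h1
    have := hd _ _ _ (-x) (h1 (Metric.mem_ball_self hδ)) (h2 (Metric.mem_ball_self hδ))
    exact Prod.ext e this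
  · intro x hx y hy hxy h
    have h1 := hlam x hx
    have h2 := hlam y hy
    rw [← h] at h2
    refine Prod.ext h (hd _ _ _ y (h1 ?_) (h2 (Metric.mem_ball_self hδ)))
    rw [Metric.mem_ball, dist_comm]; exact hxy

end BU

namespace BU

/-- The pairing `⟨u', x⟩`. -/
def ip {n : ℕ} (u : EuclideanSpace ℝ (Fin (n + 1))) (x : EuclideanSpace ℝ (Fin n)) : ℝ :=
  ∑ i : Fin n, u (Fin.castSucc i) * x i

theorem mem_plus {n : ℕ} {u : EuclideanSpace ℝ (Fin (n + 1))} {x : EuclideanSpace ℝ (Fin n)} :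
    x ∈ Hplus n u ↔ u (Fin.last n) ≤ ip u x := Iff.rfl

theorem mem_minus {n : ℕ} {u : EuclideanSpace ℝ (Fin (n + 1))} {x : EuclideanSpace ℝ (Fin n)} :
    x ∈ Hminus n u ↔ ip u x ≤ u (Fin.last n) := Iff.rfl

theorem ip_cont {n : ℕ} : Continuous (fun p : EuclideanSpace ℝ (Fin (n + 1)) ×
    EuclideanSpace ℝ (Fin n) => ip p.1 p.2) := by
  unfold ip; fun_prop

theorem fQ_cont {n : ℕ} (Q : Matrix (Fin n) (Fin n) ℝ) :
    Continuous (fun p : EuclideanSpace ℝ (Fin (n + 1)) ×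
    EuclideanSpace ℝ (Fin n) => fQ n Q p.2 p.1) := by
  unfold fQ Matrix.mulVec dotProduct; fun_prop

theorem ip_neg {n : ℕ} (u : EuclideanSpace ℝ (Fin (n + 1))) (x : EuclideanSpace ℝ (Fin n)) :
    ip (-u) x = - ip u x := by simp [ip]

theorem ip_smul {n : ℕ} (r : ℝ) (u : EuclideanSpace ℝ (Fin (n + 1)))
    (x : EuclideanSpace ℝ (Fin n)) : ip (r • u) x = r * ip u x := by
  simp [ip, Finset.mul_sum, mul_assoc]

theorem fQ_neg {n : ℕ} (Q : Matrix (Fin n) (Fin n) ℝ) (u : EuclideanSpace ℝ (Fin (n + 1)))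
    (x : EuclideanSpace ℝ (Fin n)) : fQ n Q x (-u) = - fQ n Q x u := by simp [fQ]

theorem fQ_smul {n : ℕ} (Q : Matrix (Fin n) (Fin n) ℝ) (r : ℝ)
    (u : EuclideanSpace ℝ (Fin (n + 1)))
    (x : EuclideanSpace ℝ (Fin n)) : fQ n Q x (r • u) = r * fQ n Q x u := by
  simp [fQ, Finset.mul_sum, mul_assoc]

theorem ip_comb {n : ℕ} (u : EuclideanSpace ℝ (Fin (n + 1)))
    (x y : EuclideanSpace ℝ (Fin n)) (a b : ℝ) :
    ip u (a • x + b • y) = a * ip u x + b * ip u y := by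
  simp only [ip, Finset.mul_sum, ← Finset.sum_add_distrib]
  refine Finset.sum_congr rfl fun i _ => ?_
  simp; ring

theorem fQ_comb {n : ℕ} (Q : Matrix (Fin n) (Fin n) ℝ) (u : EuclideanSpace ℝ (Fin (n + 1)))
    (x y : EuclideanSpace ℝ (Fin n)) (a b : ℝ) :
    fQ n Q (a • x + b • y) u = a * fQ n Q x u + b * fQ n Q y u := by
  simp only [fQ, Finset.mul_sum, ← Finset.sum_add_distrib]
  refine Finset.sum_congr rfl fun i _ => ?_
  have : Q.mulVec (a • x + b • y).ofLp = a • Q.mulVec x.ofLp + b • Q.mulVec y.ofLp := by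
    simp [Matrix.mulVec_add, Matrix.mulVec_smul]
  rw [this]
  simp; ring

/-- The parameters `u` where the positive side is strictly wider. -/
def Pos {n : ℕ} (A : Set (EuclideanSpace ℝ (Fin n))) (Q : Matrix (Fin n) (Fin n) ℝ) :
    Set (EuclideanSpace ℝ (Fin (n + 1))) :=
  {u | ∃ x ∈ A ∩ Hplus n u, ∃ y ∈ A ∩ Hplus n u, ∀ x' ∈ A ∩ Hminus n u, ∀ y' ∈ A ∩ Hminus n u,
    fQ n Q x' u - fQ n Q y' u < fQ n Q x u - fQ n Q y u}

theorem isCompact_minus {n : ℕ} {A : Set (EuclideanSpace ℝ (Fin n))} (hA : IsCompact A)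
    (u : EuclideanSpace ℝ (Fin (n + 1))) : IsCompact (A ∩ Hminus n u) := by
  refine hA.inter_right ?_
  exact isClosed_le (ip_cont.comp (Continuous.prodMk_right u)) continuous_const

theorem isCompact_plus {n : ℕ} {A : Set (EuclideanSpace ℝ (Fin n))} (hA : IsCompact A)
    (u : EuclideanSpace ℝ (Fin (n + 1))) : IsCompact (A ∩ Hplus n u) := by
  refine hA.inter_right ?_
  exact isClosed_le continuous_const (ip_cont.comp (Continuous.prodMk_right u))

theorem fQ_cont_x {n : ℕ} (Q : Matrix (Fin n) (Fin n) ℝ) (u : EuclideanSpace ℝ (Fin (n + 1))) :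
    Continuous (fun x => fQ n Q x u) := (fQ_cont Q).comp (Continuous.prodMk_right u)

theorem pos_strict {n : ℕ} {A : Set (EuclideanSpace ℝ (Fin n))} (Q : Matrix (Fin n) (Fin n) ℝ)
    (hcomp : IsCompact A) (hconv : Convex ℝ A)
    (hstrict : ∀ (v : EuclideanSpace ℝ (Fin n)) (c : ℝ), v ≠ 0 →
      (∀ y ∈ A, (∑ j : Fin n, v j * y j) ≤ c) →
      ({y ∈ A | (∑ j : Fin n, v j * y j) = c}).Subsingleton)
    (u : EuclideanSpace ℝ (Fin (n + 1))) (hu : u ∈ Pos A Q) :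
    ∃ x ∈ A, ∃ y ∈ A, u (Fin.last n) < ip u x ∧ u (Fin.last n) < ip u y ∧
      ∀ x' ∈ A ∩ Hminus n u, ∀ y' ∈ A ∩ Hminus n u,
    fQ n Q x' u - fQ n Q y' u < fQ n Q x u - fQ n Q y u := by
  obtain ⟨x, ⟨hx, hxp⟩, y, ⟨hy, hyp⟩, h⟩ := hu
  rw [mem_plus] at hxp hyp
  rcases (A ∩ Hminus n u).eq_empty_or_nonempty with he | hne
  · have : u (Fin.last n) < ip u x := by
      by_contra hc
      have : x ∈ A ∩ Hminus n u := ⟨hx, mem_minus.mpr (not_lt.mp hc)⟩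
      rw [he] at this
      exact this
    refine ⟨x, hx, x, hx, this, this, ?_⟩
    intro x' hx'
    rw [he] at hx'
    exact hx'.elim
  · obtain ⟨w, hw⟩ := hne
    have hxy := h w hw w hw
    rw [sub_self] at hxy
    obtain ⟨z, hz, hzs⟩ : ∃ z ∈ A, u (Fin.last n) < ip u z := by
      by_contra! hc
      have hv : (WithLp.toLp 2 (fun i : Fin n => u (Fin.castSucc i)) :
          EuclideanSpace ℝ (Fin n)) ≠ 0 := by
        intro h0
        have h1 : ∀ i : Fin n, u (Fin.castSucc i) = 0 := by
          intro i
          have := congrArg (fun v : EuclideanSpace ℝ (Fin n) => v i) h0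
          simpa using this
        simp [fQ, h1] at hxy
      have hs := hstrict _ (u (Fin.last n)) hv hc
      have : x = y := hs ⟨hx, le_antisymm (hc x hx) hxp⟩ ⟨hy, le_antisymm (hc y hy) hyp⟩
      rw [this] at hxy
      simp at hxy
    have hcm := isCompact_minus hcomp u
    obtain ⟨p, ⟨hp1, hp2⟩, hpm⟩ := (hcm.prod hcm).exists_isMaxOn ⟨(w, w), hw, hw⟩
      (f := fun p => fQ n Q p.1 u - fQ n Q p.2 u)
      (((fQ_cont_x Q u).comp continuous_fst).sub ((fQ_cont_x Q u).comp continuous_snd)).continuousOn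
    have hpΔ := h _ hp1 _ hp2
    have hp0 : 0 ≤ fQ n Q p.1 u - fQ n Q p.2 u := by
      have := hpm (show (w, w) ∈ _ from ⟨hw, hw⟩)
      simpa using this
    generalize hM : fQ n Q p.1 u - fQ n Q p.2 u = M at hpΔ hp0
    generalize hΔ : fQ n Q x u - fQ n Q y u = Δ at hpΔ hxy
    obtain ⟨ε, hε, hε1, hεM⟩ : ∃ ε : ℝ, 0 < ε ∧ ε ≤ 1 ∧ M < (1 - ε) * Δ := by
      refine ⟨(Δ - M) / (2 * Δ), div_pos (by linarith) (by linarith), ?_, ?_⟩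
      · rw [div_le_one (by linarith)]; linarith
      · have : (1 - (Δ - M) / (2 * Δ)) * Δ = (Δ + M) / 2 := by field_simp; ring
        rw [this]; linarith
    refine ⟨(1 - ε) • x + ε • z, hconv hx hz (by linarith) hε.le (by ring),
      (1 - ε) • y + ε • z, hconv hy hz (by linarith) hε.le (by ring), ?_, ?_, ?_⟩
    · rw [ip_comb]; nlinarith
    · rw [ip_comb]; nlinarith
    · intro x' hx' y' hy'
      have h1 : fQ n Q x' u - fQ n Q y' u ≤ fQ n Q p.1 u - fQ n Q p.2 u :=
        hpm (show (x', y') ∈ _ from ⟨hx', hy'⟩)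
      rw [fQ_comb, fQ_comb]
      have : (1 - ε) * fQ n Q x u + ε * fQ n Q z u - ((1 - ε) * fQ n Q y u + ε * fQ n Q z u)
          = (1 - ε) * Δ := by rw [← hΔ]; ring
      rw [this]
      linarith

theorem pos_open {n : ℕ} {A : Set (EuclideanSpace ℝ (Fin n))} (Q : Matrix (Fin n) (Fin n) ℝ)
    (hcomp : IsCompact A) (hconv : Convex ℝ A)
    (hstrict : ∀ (v : EuclideanSpace ℝ (Fin n)) (c : ℝ), v ≠ 0 →
      (∀ y ∈ A, (∑ j : Fin n, v j * y j) ≤ c) →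
      ({y ∈ A | (∑ j : Fin n, v j * y j) = c}).Subsingleton) : IsOpen (Pos A Q) := by
  rw [isOpen_iff_mem_nhds]
  intro u hu
  obtain ⟨x, hx, y, hy, hxs, hys, h⟩ := pos_strict Q hcomp hconv hstrict u hu
  have cl : Continuous (fun u : EuclideanSpace ℝ (Fin (n + 1)) => u (Fin.last n)) := by fun_prop
  have ci : ∀ x, Continuous (fun u : EuclideanSpace ℝ (Fin (n + 1)) => ip u x) := fun x =>
    ip_cont.comp (Continuous.prodMk_left x)
  have cf : ∀ x, Continuous (fun u : EuclideanSpace ℝ (Fin (n + 1)) => fQ n Q x u) := fun x =>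
    (fQ_cont Q).comp (Continuous.prodMk_left x)
  have e1 := (isOpen_lt cl (ci x)).mem_nhds hxs
  have e2 := (isOpen_lt cl (ci y)).mem_nhds hys
  have e3 := (hcomp.prod hcomp).eventually_forall_of_forall_eventually (x₀ := u)
    (P := fun (u : EuclideanSpace ℝ (Fin (n + 1)))
      (p : EuclideanSpace ℝ (Fin n) × EuclideanSpace ℝ (Fin n)) =>
      u (Fin.last n) < ip u p.1 ∨ u (Fin.last n) < ip u p.2 ∨
      fQ n Q p.1 u - fQ n Q p.2 u < fQ n Q x u - fQ n Q y u) (by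
      rintro p ⟨hp1, hp2⟩
      have c1 : Continuous (fun z : EuclideanSpace ℝ (Fin (n + 1)) ×
          (EuclideanSpace ℝ (Fin n) × EuclideanSpace ℝ (Fin n)) => (z.1, z.2.1)) := by fun_prop
      have c2 : Continuous (fun z : EuclideanSpace ℝ (Fin (n + 1)) ×
          (EuclideanSpace ℝ (Fin n) × EuclideanSpace ℝ (Fin n)) => (z.1, z.2.2)) := by fun_prop
      have o1 := isOpen_lt (cl.comp continuous_fst) (ip_cont.comp c1)
      have o2 := isOpen_lt (cl.comp continuous_fst) (ip_cont.comp c2)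
      have o3 := isOpen_lt (((fQ_cont Q).comp c1).sub ((fQ_cont Q).comp c2))
        (((cf x).comp continuous_fst).sub ((cf y).comp continuous_fst))
      refine (o1.union (o2.union o3)).mem_nhds (x := (u, p)) ?_
      by_cases h1 : u (Fin.last n) < ip u p.1
      · exact Or.inl h1
      by_cases h2 : u (Fin.last n) < ip u p.2
      · exact Or.inr (Or.inl h2)
      exact Or.inr (Or.inr (h _ ⟨hp1, not_lt.mp h1⟩ _ ⟨hp2, not_lt.mp h2⟩)))
  filter_upwards [e1, e2, e3] with w h1 h2 h3
  refine ⟨x, ⟨hx, le_of_lt h1⟩, y, ⟨hy, le_of_lt h2⟩, ?_⟩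
  rintro x' ⟨hx', hx''⟩ y' ⟨hy', hy''⟩
  rw [mem_minus] at hx'' hy''
  rcases h3 (x', y') ⟨hx', hy'⟩ with h | h | h
  · exact absurd h (not_lt.mpr hx'')
  · exact absurd h (not_lt.mpr hy'')
  · exact h

theorem plus_neg {n : ℕ} (u : EuclideanSpace ℝ (Fin (n + 1))) : Hplus n (-u) = Hminus n u := by
  ext x; rw [mem_plus, mem_minus, ip_neg]; simp

theorem minus_neg {n : ℕ} (u : EuclideanSpace ℝ (Fin (n + 1))) : Hminus n (-u) = Hplus n u := by
  ext x; rw [mem_plus, mem_minus, ip_neg]; simp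

theorem pos_smul {n : ℕ} {A : Set (EuclideanSpace ℝ (Fin n))} {Q : Matrix (Fin n) (Fin n) ℝ}
    {u : EuclideanSpace ℝ (Fin (n + 1))} {r : ℝ} (hr : 0 < r) (hu : u ∈ Pos A Q) :
    r • u ∈ Pos A Q := by
  have hp : Hplus n (r • u) = Hplus n u := by
    ext x; rw [mem_plus, mem_plus, ip_smul]; simp [hr]
  have hm : Hminus n (r • u) = Hminus n u := by
    ext x; rw [mem_minus, mem_minus, ip_smul]; simp [hr]
  obtain ⟨x, hx, y, hy, h⟩ := hu
  refine ⟨x, by rwa [hp], y, by rwa [hp], ?_⟩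
  rw [hm]
  intro x' hx' y' hy'
  simp only [fQ_smul, ← mul_sub]
  exact mul_lt_mul_of_pos_left (h x' hx' y' hy') hr

theorem pos_of {n : ℕ} {A : Set (EuclideanSpace ℝ (Fin n))} {Q : Matrix (Fin n) (Fin n) ℝ}
    (hne : A.Nonempty) (hcomp : IsCompact A) (u : EuclideanSpace ℝ (Fin (n + 1)))
    (h : ¬ ((A ∩ Hplus n u).Nonempty ∧ (A ∩ Hminus n u).Nonempty ∧
        sSup ((fun x => fQ n Q x u) '' (A ∩ Hplus n u)) -
            sInf ((fun x => fQ n Q x u) '' (A ∩ Hplus n u)) =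
          sSup ((fun x => fQ n Q x u) '' (A ∩ Hminus n u)) -
            sInf ((fun x => fQ n Q x u) '' (A ∩ Hminus n u)))) :
    u ∈ Pos A Q ∨ -u ∈ Pos A Q := by
  obtain ⟨a, ha⟩ := hne
  by_cases h1 : (A ∩ Hplus n u).Nonempty
  · by_cases h2 : (A ∩ Hminus n u).Nonempty
    · have c1 := (isCompact_plus hcomp u).image (fQ_cont_x Q u)
      have c2 := (isCompact_minus hcomp u).image (fQ_cont_x Q u)
      have n1 := h1.image (fun x => fQ n Q x u)
      have n2 := h2.image (fun x => fQ n Q x u)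
      obtain ⟨xM, hxM, exM⟩ := c1.sSup_mem n1
      obtain ⟨xm, hxm, exm⟩ := c1.sInf_mem n1
      obtain ⟨yM, hyM, eyM⟩ := c2.sSup_mem n2
      obtain ⟨ym, hym, eym⟩ := c2.sInf_mem n2
      have b1 : ∀ x ∈ A ∩ Hplus n u, fQ n Q x u ≤ fQ n Q xM u ∧ fQ n Q xm u ≤ fQ n Q x u := by
        intro x hx
        dsimp only at exM exm
        rw [exM, exm]
        exact ⟨le_csSup c1.bddAbove ⟨x, hx, rfl⟩, csInf_le c1.bddBelow ⟨x, hx, rfl⟩⟩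
      have b2 : ∀ x ∈ A ∩ Hminus n u, fQ n Q x u ≤ fQ n Q yM u ∧ fQ n Q ym u ≤ fQ n Q x u := by
        intro x hx
        dsimp only at eyM eym
        rw [eyM, eym]
        exact ⟨le_csSup c2.bddAbove ⟨x, hx, rfl⟩, csInf_le c2.bddBelow ⟨x, hx, rfl⟩⟩
      have hn : ¬ (fQ n Q xM u - fQ n Q xm u = fQ n Q yM u - fQ n Q ym u) := by
        intro he
        refine h ⟨h1, h2, ?_⟩
        rw [← exM, ← exm, ← eyM, ← eym]
        exact he
      rcases lt_or_gt_of_ne hn with hlt | hgt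
      · right
        refine ⟨ym, by rwa [plus_neg], yM, by rwa [plus_neg], ?_⟩
        rw [minus_neg]
        intro x' hx' y' hy'
        simp only [fQ_neg]
        linarith [(b1 x' hx').2, (b1 y' hy').1]
      · left
        refine ⟨xM, hxM, xm, hxm, ?_⟩
        intro x' hx' y' hy'
        linarith [(b2 x' hx').1, (b2 y' hy').2]
    · left
      have hap : a ∈ A ∩ Hplus n u := by
        refine ⟨ha, mem_plus.mpr ?_⟩
        by_contra hc
        exact h2 ⟨a, ha, mem_minus.mpr (not_le.mp hc).le⟩
      exact ⟨a, hap, a, hap, fun x' hx' => (h2 ⟨x', hx'⟩).elim⟩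
  · right
    have hap : a ∈ A ∩ Hplus n (-u) := by
      rw [plus_neg]
      refine ⟨ha, mem_minus.mpr ?_⟩
      by_contra hc
      exact h1 ⟨a, ha, mem_plus.mpr (not_le.mp hc).le⟩
    refine ⟨a, hap, a, hap, ?_⟩
    rw [minus_neg]
    exact fun x' hx' => (h1 ⟨x', hx'⟩).elim

theorem pos_disj {n : ℕ} {A : Set (EuclideanSpace ℝ (Fin n))} {Q : Matrix (Fin n) (Fin n) ℝ}
    (u : EuclideanSpace ℝ (Fin (n + 1))) (h1 : u ∈ Pos A Q) (h2 : -u ∈ Pos A Q) : False := by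
  obtain ⟨x, hx, y, hy, h⟩ := h1
  obtain ⟨x', hx', y', hy', h'⟩ := h2
  rw [plus_neg] at hx' hy'
  rw [minus_neg] at h'
  have a1 := h y' hy' x' hx'
  have a2 := h' y hy x hx
  simp only [fQ_neg] at a2
  linarith

end BU

theorem borsuk_ulam_nlp_bilinear (n : ℕ) (A : Fin n → Set (EuclideanSpace ℝ (Fin n)))
    (hne : ∀ i, (A i).Nonempty) (hcomp : ∀ i, IsCompact (A i)) (hconv : ∀ i, Convex ℝ (A i))
    (hint : ∀ i, (interior (A i)).Nonempty)
    (hstrict : ∀ i (v : EuclideanSpace ℝ (Fin n)) (c : ℝ), v ≠ 0 →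
      (∀ y ∈ A i, (∑ j : Fin n, v j * y j) ≤ c) →
      ({y ∈ A i | (∑ j : Fin n, v j * y j) = c}).Subsingleton)
    (Q : Fin n → Matrix (Fin n) (Fin n) ℝ) (hQ : ∀ i, (Q i).det ≠ 0) :
    ∃ u ∈ Metric.sphere (0 : EuclideanSpace ℝ (Fin (n + 1))) 1, ∀ i : Fin n,
      (A i ∩ Hplus n u).Nonempty ∧ (A i ∩ Hminus n u).Nonempty ∧
        sSup ((fun x => fQ n (Q i) x u) '' (A i ∩ Hplus n u)) -
            sInf ((fun x => fQ n (Q i) x u) '' (A i ∩ Hplus n u)) =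
          sSup ((fun x => fQ n (Q i) x u) '' (A i ∩ Hminus n u)) -
            sInf ((fun x => fQ n (Q i) x u) '' (A i ∩ Hminus n u)) := by
  by_contra hno
  push Not at hno
  refine BU.ls n (fun i s => if s then BU.Pos (A i) (Q i) else {u | -u ∈ BU.Pos (A i) (Q i)})
    ?_ ?_ ?_ ?_
  · intro i s
    have ho := BU.pos_open (Q i) (hcomp i) (hconv i) (hstrict i)
    cases s
    · exact ho.preimage continuous_neg
    · exact ho
  · intro i u h1 h2
    exact BU.pos_disj u h1 h2
  · intro i s u hu
    cases s
    · exact hu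
    · change - -u ∈ BU.Pos (A i) (Q i)
      rw [neg_neg]
      exact hu
  · intro u hu
    have hpos : 0 < ‖u‖ := norm_pos_iff.mpr hu
    obtain ⟨i, hi⟩ := hno (‖u‖⁻¹ • u) (by
      rw [mem_sphere_zero_iff_norm, norm_smul, norm_inv, norm_norm, inv_mul_cancel₀ hpos.ne'])
    have hx := BU.pos_of (hne i) (hcomp i) (‖u‖⁻¹ • u) (Q := Q i)
      (fun hh => hi hh.1 hh.2.1 hh.2.2)
    have e : ‖u‖ • ‖u‖⁻¹ • u = u := by
      rw [smul_smul, mul_inv_cancel₀ hpos.ne', one_smul]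
    rcases hx with hx | hx
    · refine ⟨i, true, ?_⟩
      have := BU.pos_smul hpos hx
      rw [e] at this
      exact this
    · refine ⟨i, false, ?_⟩
      have := BU.pos_smul hpos hx
      rw [smul_neg, e] at this
      exact this
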